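/- arXiv:2410.23220 — 2 statements merged into one kernel-verified Lean document; each statement's English description precedes it below -/
import Mathlib

section
/- Let ℓ ≥ 1 and let C, Γ : [0,1] → ℝ^d be continuous curves with ∫₀¹ C(t) dt = 0 and ∫₀¹ Γ(t) dt = 0, ‖C(t) − Γ(t)‖ ≤ 1/3 and ‖C(t)‖, ‖Γ(t)‖ < 1 for all t ∈ [0,1]. Suppose that for every 1 ≤ k ≤ ℓ − 1 and all indices j_1, …, j_k ∈ {1, …, d}, ∫₀¹ C(t)_{j_1} ⋯ C(t)_{j_k} dt = ∫₀¹ Γ(t)_{j_1} ⋯ Γ(t)_{j_k} dt. Then for all σ ≥ 1, ∫_{ℝ^d} (p_{C,σ}(x) − p_{Γ,σ}(x))² / p_{C,σ}(x) dx ≤ K_ℓ σ^{−2ℓ} ρ(C, Γ), where K_ℓ = 12 Σ_{k≥ℓ} 2^k / k!. -/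
open MeasureTheory Filter Set
noncomputable section

/-- Density `φ_σ` of the isotropic Gaussian `N(0, σ²I_d)` on `ℝ^d`. -/
def gaussDens (d : ℕ) (σ : ℝ) (x : EuclideanSpace ℝ (Fin d)) : ℝ :=
  (2 * Real.pi * σ ^ 2) ^ (-(d : ℝ) / 2) * Real.exp (-‖x‖ ^ 2 / (2 * σ ^ 2))

/-- Density `p_{C,σ}(x) = ∫₀¹ φ_σ(x − C(t)) dt` of the noisy curve distribution, i.e. the law
of `C(τ) + σξ` with `τ` uniform on `[0,1]` and `ξ ~ N(0, I_d)` independent of `τ`. -/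
def noisyDens {d : ℕ} (C : ℝ → EuclideanSpace ℝ (Fin d)) (σ : ℝ)
    (x : EuclideanSpace ℝ (Fin d)) : ℝ :=
  ∫ t in (0:ℝ)..1, gaussDens d σ (x - C t)

open scoped RealInnerProductSpace

/-- Lebesgue measure on the unit square. -/
abbrev squareMeasure : Measure (ℝ × ℝ) :=
  (volume.restrict (Ioc (0:ℝ) 1)).prod (volume.restrict (Ioc (0:ℝ) 1))

lemma gaussDens_pos (d : ℕ) {σ : ℝ} (hσ : 0 < σ) (x : EuclideanSpace ℝ (Fin d)) :
    0 < gaussDens d σ x := by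
  have := Real.pi_pos
  unfold gaussDens
  positivity

lemma continuous_gaussDens (d : ℕ) (σ : ℝ) : Continuous (gaussDens d σ) := by
  unfold gaussDens
  fun_prop

lemma integral_gaussDens (d : ℕ) {σ : ℝ} (hσ : 0 < σ) : ∫ x, gaussDens d σ x = 1 := by
  have hb : (0:ℝ) < 1 / (2 * σ ^ 2) := by positivity
  have h := GaussianFourier.integral_rexp_neg_mul_sq_norm
    (V := EuclideanSpace ℝ (Fin d)) hb
  have hpi := Real.pi_pos
  have hbase : Real.pi / (1 / (2 * σ ^ 2)) = 2 * Real.pi * σ ^ 2 := by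
    field_simp
  rw [hbase, finrank_euclideanSpace, Fintype.card_fin] at h
  have hexp : ∀ v : EuclideanSpace ℝ (Fin d),
      -‖v‖ ^ 2 / (2 * σ ^ 2) = -(1 / (2 * σ ^ 2)) * ‖v‖ ^ 2 := fun v => by ring
  simp only [gaussDens, integral_const_mul, hexp, h]
  rw [← Real.rpow_add (by positivity)]
  convert Real.rpow_zero _ using 2
  ring

lemma integrable_gaussDens (d : ℕ) {σ : ℝ} (hσ : 0 < σ) : Integrable (gaussDens d σ) :=
  Integrable.of_integral_ne_zero (by rw [integral_gaussDens d hσ]; exact one_ne_zero)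

lemma gaussDens_sub (d : ℕ) (σ : ℝ) (x a : EuclideanSpace ℝ (Fin d)) :
    gaussDens d σ (x - a)
      = gaussDens d σ x * Real.exp (⟪x, a⟫ / σ ^ 2 - ‖a‖ ^ 2 / (2 * σ ^ 2)) := by
  unfold gaussDens
  rw [mul_assoc (_ ^ _), ← Real.exp_add, norm_sub_sq_real]
  congr 2
  ring

lemma gaussDens_sub_mul_div (d : ℕ) {σ : ℝ} (hσ : 0 < σ) (x a b : EuclideanSpace ℝ (Fin d)) :
    gaussDens d σ (x - a) * gaussDens d σ (x - b) / gaussDens d σ x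
      = gaussDens d σ (x - (a + b)) * Real.exp (⟪a, b⟫ / σ ^ 2) := by
  have hx := (gaussDens_pos d hσ x).ne'
  rw [gaussDens_sub, gaussDens_sub, gaussDens_sub, div_eq_iff hx, norm_add_sq_real,
    inner_add_right]
  have : ∀ g e₁ e₂ e₃ e₄ : ℝ, e₁ + e₂ = e₃ + e₄ →
      g * Real.exp e₁ * (g * Real.exp e₂) = g * Real.exp e₃ * Real.exp e₄ * g := by
    intro g e₁ e₂ e₃ e₄ h
    have : Real.exp e₁ * Real.exp e₂ = Real.exp e₃ * Real.exp e₄ := by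
      rw [← Real.exp_add, ← Real.exp_add, h]
    linear_combination g * g * this
  apply this
  ring

lemma integrable_squareMeasure_of_continuous {f : ℝ × ℝ → ℝ} (hf : Continuous f) :
    Integrable f squareMeasure := by
  rw [squareMeasure, Measure.prod_restrict]
  refine IntegrableOn.mono_set (t := Icc 0 1 ×ˢ Icc 0 1) ?_
    (Set.prod_mono Ioc_subset_Icc_self Ioc_subset_Icc_self)
  exact hf.continuousOn.integrableOn_compact (isCompact_Icc.prod isCompact_Icc)

lemma ae_squareMeasure_mem : ∀ᵐ z ∂squareMeasure, z.1 ∈ Icc (0:ℝ) 1 ∧ z.2 ∈ Icc (0:ℝ) 1 := by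
  rw [squareMeasure, Measure.prod_restrict]
  filter_upwards [ae_restrict_mem (measurableSet_Ioc.prod measurableSet_Ioc)] with z hz
  exact ⟨Ioc_subset_Icc_self hz.1, Ioc_subset_Icc_self hz.2⟩

/-- The inner product of two Gaussian mixtures in `L²(1 / φ_σ)`. -/
lemma noisyDens_mul_div_gaussDens {d : ℕ} {A B : ℝ → EuclideanSpace ℝ (Fin d)}
    (hA : Continuous A) (hB : Continuous B) {σ : ℝ} (hσ : 0 < σ) :
    Integrable (fun x => noisyDens A σ x * noisyDens B σ x / gaussDens d σ x) ∧
    ∫ x, noisyDens A σ x * noisyDens B σ x / gaussDens d σ x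
      = ∫ z, Real.exp (⟪A z.1, B z.2⟫ / σ ^ 2) ∂squareMeasure := by
  set F : EuclideanSpace ℝ (Fin d) × (ℝ × ℝ) → ℝ := fun p =>
    gaussDens d σ (p.1 - (A p.2.1 + B p.2.2)) * Real.exp (⟪A p.2.1, B p.2.2⟫ / σ ^ 2) with hF
  have hFc : Continuous F := by
    have := continuous_gaussDens d σ
    fun_prop
  have hslice : ∀ z : ℝ × ℝ, ∫ x, F (x, z) = Real.exp (⟪A z.1, B z.2⟫ / σ ^ 2) := by
    intro z
    simp only [hF]
    rw [integral_mul_const, integral_sub_right_eq_self (gaussDens d σ), integral_gaussDens d hσ,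
      one_mul]
  have hFnn : ∀ p, 0 ≤ F p := fun p => mul_nonneg (gaussDens_pos d hσ _).le (Real.exp_pos _).le
  have hFi : Integrable F (volume.prod squareMeasure) := by
    rw [integrable_prod_iff' hFc.aestronglyMeasurable]
    refine ⟨ae_of_all _ fun z => ?_, ?_⟩
    · have h := ((integrable_gaussDens d hσ).comp_sub_right (A z.1 + B z.2)).mul_const
        (Real.exp (⟪A z.1, B z.2⟫ / σ ^ 2))
      exact h
    · simp only [Real.norm_of_nonneg (hFnn _), hslice]
      exact integrable_squareMeasure_of_continuous (by fun_prop)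
  have hmix : ∀ x, noisyDens A σ x * noisyDens B σ x / gaussDens d σ x
      = ∫ z, F (x, z) ∂squareMeasure := by
    intro x
    simp only [hF, ← gaussDens_sub_mul_div d hσ, noisyDens,
      intervalIntegral.integral_of_le zero_le_one]
    rw [integral_div, integral_prod_mul (fun s => gaussDens d σ (x - A s))
      (fun t => gaussDens d σ (x - B t))]
  simp only [hmix]
  refine ⟨hFi.integral_prod_left, ?_⟩
  rw [integral_integral_swap (f := fun x z => F (x, z)) hFi]
  simp only [hslice]

/-- Jensen's inequality for the mixture of likelihood ratios of a centred curve. -/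
lemma half_gaussDens_le_noisyDens {d : ℕ} {C : ℝ → EuclideanSpace ℝ (Fin d)}
    (hC : Continuous C) (hC0 : (∫ t in (0:ℝ)..1, C t) = 0)
    (hCb : ∀ t ∈ Icc (0:ℝ) 1, ‖C t‖ < 1) {σ : ℝ} (hσ : 1 ≤ σ) (x : EuclideanSpace ℝ (Fin d)) :
    gaussDens d σ x / 2 ≤ noisyDens C σ x := by
  have hx := gaussDens_pos d (zero_lt_one.trans_le hσ) x
  have hinner : ∫ t in (0:ℝ)..1, ⟪x, C t⟫ = 0 := by
    have := (innerSL ℝ x).intervalIntegral_comp_comm (hC.intervalIntegrable (μ := volume) 0 1)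
    simpa [hC0] using this
  have hexp : (1:ℝ) / 2 ≤ Real.exp (-1 / 2) := by
    linarith [Real.add_one_le_exp (-1 / 2 : ℝ)]
  have hgauss := continuous_gaussDens d σ
  have hlow : ∫ t in (0:ℝ)..1, gaussDens d σ x * (Real.exp (-1 / 2) * (1 + ⟪x, C t⟫ / σ ^ 2))
      ≤ noisyDens C σ x := by
    refine intervalIntegral.integral_mono_on zero_le_one
      (Continuous.intervalIntegrable (by fun_prop) _ _)
      (Continuous.intervalIntegrable (by fun_prop) _ _) fun t ht => ?_
    rw [gaussDens_sub, sub_eq_neg_add, Real.exp_add]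
    have h1 : ‖C t‖ ^ 2 ≤ 1 := pow_le_one₀ (norm_nonneg _) (hCb t ht).le
    have h2 : ‖C t‖ ^ 2 / (2 * σ ^ 2) ≤ 1 / 2 := by
      gcongr
      nlinarith
    have h3 : 1 + ⟪x, C t⟫ / σ ^ 2 ≤ Real.exp (⟪x, C t⟫ / σ ^ 2) := by
      linarith [Real.add_one_le_exp (⟪x, C t⟫ / σ ^ 2)]
    refine mul_le_mul_of_nonneg_left ?_ hx.le
    refine (mul_le_mul_of_nonneg_left h3 (Real.exp_pos _).le).trans ?_
    gcongr
    linarith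
  rw [intervalIntegral.integral_const_mul, intervalIntegral.integral_const_mul,
    intervalIntegral.integral_add (Continuous.intervalIntegrable (by fun_prop) _ _)
    (Continuous.intervalIntegrable (by fun_prop) _ _), intervalIntegral.integral_div,
    hinner] at hlow
  simp only [intervalIntegral.integral_const, sub_zero, smul_eq_mul, mul_one, zero_div,
    add_zero] at hlow
  nlinarith

lemma inner_pow_eq_sum {d : ℕ} (a b : EuclideanSpace ℝ (Fin d)) (k : ℕ) :
    ⟪a, b⟫ ^ k = ∑ j : Fin k → Fin d, (∏ i, a (j i)) * ∏ i, b (j i) := by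
  rw [PiLp.inner_apply, Fintype.sum_pow]
  refine Finset.sum_congr rfl fun j _ => ?_
  rw [← Finset.prod_mul_distrib]
  exact Finset.prod_congr rfl fun i _ => by simp [mul_comm]

/-- The mixed moment of order `k` of the curve `A`. -/
def curveMoment {d k : ℕ} (A : ℝ → EuclideanSpace ℝ (Fin d)) (j : Fin k → Fin d) : ℝ :=
  ∫ t in (0:ℝ)..1, ∏ i, A t (j i)

lemma integral_inner_pow {d : ℕ} {A B : ℝ → EuclideanSpace ℝ (Fin d)}
    (hA : Continuous A) (hB : Continuous B) (k : ℕ) :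
    ∫ z, ⟪A z.1, B z.2⟫ ^ k ∂squareMeasure
      = ∑ j : Fin k → Fin d, curveMoment A j * curveMoment B j := by
  simp only [inner_pow_eq_sum]
  rw [integral_finsetSum]
  · refine Finset.sum_congr rfl fun j _ => ?_
    rw [curveMoment, curveMoment, intervalIntegral.integral_of_le zero_le_one,
      intervalIntegral.integral_of_le zero_le_one,
      integral_prod_mul (fun s => ∏ i, A s (j i)) (fun t => ∏ i, B t (j i))]
  · intro j _
    exact integrable_squareMeasure_of_continuous (by fun_prop)

lemma hasSum_integral_exp_inner {d : ℕ} {A B : ℝ → EuclideanSpace ℝ (Fin d)}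
    (hA : Continuous A) (hB : Continuous B) (hAb : ∀ t ∈ Icc (0:ℝ) 1, ‖A t‖ < 1)
    (hBb : ∀ t ∈ Icc (0:ℝ) 1, ‖B t‖ < 1) {σ : ℝ} (hσ : 1 ≤ σ) :
    HasSum (fun k : ℕ => (∑ j : Fin k → Fin d, curveMoment A j * curveMoment B j)
        / (σ ^ (2 * k) * k.factorial))
      (∫ z, Real.exp (⟪A z.1, B z.2⟫ / σ ^ 2) ∂squareMeasure) := by
  have hterm : ∀ k : ℕ, (∑ j : Fin k → Fin d, curveMoment A j * curveMoment B j)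
        / (σ ^ (2 * k) * k.factorial)
      = ∫ z, (⟪A z.1, B z.2⟫ / σ ^ 2) ^ k / k.factorial ∂squareMeasure := by
    intro k
    simp only [div_pow, ← pow_mul, div_div]
    rw [integral_div, integral_inner_pow hA hB]
  simp only [hterm]
  have hs : Summable fun k : ℕ => (1:ℝ) / k.factorial := by
    simpa using Real.summable_pow_div_factorial 1
  refine hasSum_integral_of_dominated_convergence (fun k _ => 1 / k.factorial) (fun k => ?_)
    (fun k => ?_) (ae_of_all _ fun _ => hs) (integrable_const _) (ae_of_all _ fun z => ?_)
  · exact Continuous.aestronglyMeasurable (by fun_prop)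
  · filter_upwards [ae_squareMeasure_mem] with z hz
    have h1 : |⟪A z.1, B z.2⟫| ≤ 1 := (abs_real_inner_le_norm _ _).trans
      (mul_le_one₀ (hAb _ hz.1).le (norm_nonneg _) (hBb _ hz.2).le)
    have h2 : |⟪A z.1, B z.2⟫ / σ ^ 2| ≤ 1 := by
      rw [abs_div, abs_of_pos (show 0 < σ ^ 2 by positivity)]
      exact div_le_one_of_le₀ (h1.trans (one_le_pow₀ hσ)) (by positivity)
    rw [norm_div, norm_pow, Real.norm_eq_abs, RCLike.norm_natCast]
    gcongr
    exact pow_le_one₀ (abs_nonneg _) h2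
  · rw [Real.exp_eq_exp_ℝ]
    exact NormedSpace.expSeries_div_hasSum_exp (𝔸 := ℝ) _

lemma sq_intervalIntegral_le {f : ℝ → ℝ} (hf : Continuous f) :
    (∫ t in (0:ℝ)..1, f t) ^ 2 ≤ ∫ t in (0:ℝ)..1, f t ^ 2 := by
  set m := ∫ t in (0:ℝ)..1, f t with hm
  have h : ∫ t in (0:ℝ)..1, (2 * m * f t - m ^ 2) ≤ ∫ t in (0:ℝ)..1, f t ^ 2 := by
    refine intervalIntegral.integral_mono_on zero_le_one
      (Continuous.intervalIntegrable (by fun_prop) _ _)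
      (Continuous.intervalIntegrable (by fun_prop) _ _) fun t _ => ?_
    nlinarith [sq_nonneg (f t - m)]
  rw [intervalIntegral.integral_sub (Continuous.intervalIntegrable (by fun_prop) _ _)
    (Continuous.intervalIntegrable (by fun_prop) _ _), intervalIntegral.integral_const_mul,
    ← hm] at h
  simp at h
  nlinarith

/-- The squared distance between the `k`-th tensor powers of two vectors of the unit ball. -/
lemma sum_sq_prod_sub_prod_le {d : ℕ} {a b : EuclideanSpace ℝ (Fin d)} (ha : ‖a‖ ≤ 1)
    (hb : ‖b‖ ≤ 1) (k : ℕ) :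
    ∑ j : Fin k → Fin d, (∏ i, a (j i) - ∏ i, b (j i)) ^ 2 ≤ (k:ℝ) ^ 2 * ‖a - b‖ ^ 2 := by
  have hpow : ∀ p q : ℝ, |p| ≤ 1 → |q| ≤ 1 → |p ^ k - q ^ k| ≤ k * |p - q| := by
    intro p q hp hq
    refine (abs_pow_sub_pow_le p q k).trans ?_
    have : max |p| |q| ^ (k - 1) ≤ 1 :=
      pow_le_one₀ (le_max_of_le_left (abs_nonneg _)) (max_le hp hq)
    nlinarith [mul_nonneg (abs_nonneg (p - q)) k.cast_nonneg]
  have hexpand : ∑ j : Fin k → Fin d, (∏ i, a (j i) - ∏ i, b (j i)) ^ 2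
      = ⟪a, a⟫ ^ k - 2 * ⟪a, b⟫ ^ k + ⟪b, b⟫ ^ k := by
    simp only [inner_pow_eq_sum, Finset.mul_sum, ← Finset.sum_sub_distrib,
      ← Finset.sum_add_distrib]
    exact Finset.sum_congr rfl fun j _ => by ring
  have hab : |⟪a, b⟫| ≤ ‖a‖ * ‖b‖ := abs_real_inner_le_norm a b
  have hab1 : ‖a‖ * ‖b‖ ≤ 1 := mul_le_one₀ ha (norm_nonneg _) hb
  have h1 := hpow ‖a‖ ‖b‖ (by simpa using ha) (by simpa using hb)
  have h2 := hpow (‖a‖ * ‖b‖) ⟪a, b⟫ (by rwa [abs_of_nonneg (by positivity)]) (hab.trans hab1)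
  have hgap : 0 ≤ ‖a‖ * ‖b‖ - ⟪a, b⟫ := sub_nonneg.2 ((le_abs_self _).trans hab)
  rw [abs_of_nonneg hgap] at h2
  have h3 : (‖a‖ ^ k - ‖b‖ ^ k) ^ 2 ≤ (k:ℝ) ^ 2 * (‖a‖ - ‖b‖) ^ 2 := by
    rw [← sq_abs, ← sq_abs (‖a‖ - ‖b‖), ← mul_pow]
    gcongr
  have h4 : (k:ℝ) ≤ (k:ℝ) ^ 2 := by exact_mod_cast Nat.le_self_pow two_ne_zero k
  rw [hexpand, norm_sub_sq_real, real_inner_self_eq_norm_sq, real_inner_self_eq_norm_sq,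
    ← pow_mul, ← pow_mul, mul_comm 2 k, pow_mul, pow_mul]
  have h5 := (le_abs_self _).trans h2
  rw [mul_pow] at h5
  nlinarith [mul_le_mul_of_nonneg_right h4 hgap]

lemma sum_sq_curveMoment_sub_le {d : ℕ} {A B : ℝ → EuclideanSpace ℝ (Fin d)}
    (hA : Continuous A) (hB : Continuous B) (hAb : ∀ t ∈ Icc (0:ℝ) 1, ‖A t‖ < 1)
    (hBb : ∀ t ∈ Icc (0:ℝ) 1, ‖B t‖ < 1) (k : ℕ) :
    ∑ j : Fin k → Fin d, (curveMoment A j - curveMoment B j) ^ 2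
      ≤ (k:ℝ) ^ 2 * ∫ t in (0:ℝ)..1, ‖A t - B t‖ ^ 2 := by
  calc _ ≤ ∑ j : Fin k → Fin d,
        ∫ t in (0:ℝ)..1, (∏ i, A t (j i) - ∏ i, B t (j i)) ^ 2 := by
        refine Finset.sum_le_sum fun j _ => ?_
        rw [curveMoment, curveMoment, ← intervalIntegral.integral_sub
          (Continuous.intervalIntegrable (by fun_prop) _ _)
          (Continuous.intervalIntegrable (by fun_prop) _ _)]
        exact sq_intervalIntegral_le (by fun_prop)
    _ = ∫ t in (0:ℝ)..1, ∑ j : Fin k → Fin d, (∏ i, A t (j i) - ∏ i, B t (j i)) ^ 2 := by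
        rw [intervalIntegral.integral_finsetSum]
        exact fun j _ => Continuous.intervalIntegrable (by fun_prop) _ _
    _ ≤ ∫ t in (0:ℝ)..1, (k:ℝ) ^ 2 * ‖A t - B t‖ ^ 2 := by
        refine intervalIntegral.integral_mono_on zero_le_one
          (Continuous.intervalIntegrable (by fun_prop) _ _)
          (Continuous.intervalIntegrable (by fun_prop) _ _) fun t ht => ?_
        exact sum_sq_prod_sub_prod_le (hAb t ht).le (hBb t ht).le k
    _ = _ := intervalIntegral.integral_const_mul _ _

lemma sq_le_six_mul_two_pow (k : ℕ) : (k:ℝ) ^ 2 ≤ 6 * 2 ^ k := by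
  have h : ∀ k : ℕ, k ^ 2 + 2 * k + 3 ≤ 6 * 2 ^ k := by
    intro k
    induction k with
    | zero => norm_num
    | succ n ih => rw [pow_succ 2 n]; nlinarith
  exact_mod_cast (by have := h k; omega : k ^ 2 ≤ 6 * 2 ^ k)

/-- The `L²(1 / φ_σ)` distance of two noisy curves, expanded over their moments. -/
lemma integral_sq_noisyDens_sub_div {d : ℕ} {A B : ℝ → EuclideanSpace ℝ (Fin d)}
    (hA : Continuous A) (hB : Continuous B) (hAb : ∀ t ∈ Icc (0:ℝ) 1, ‖A t‖ < 1)
    (hBb : ∀ t ∈ Icc (0:ℝ) 1, ‖B t‖ < 1) {σ : ℝ} (hσ : 1 ≤ σ) :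
    Integrable (fun x => (noisyDens A σ x - noisyDens B σ x) ^ 2 / gaussDens d σ x) ∧
    HasSum (fun k : ℕ => (∑ j : Fin k → Fin d, (curveMoment A j - curveMoment B j) ^ 2)
        / (σ ^ (2 * k) * k.factorial))
      (∫ x, (noisyDens A σ x - noisyDens B σ x) ^ 2 / gaussDens d σ x) := by
  have hσ0 : 0 < σ := zero_lt_one.trans_le hσ
  obtain ⟨iAA, eAA⟩ := noisyDens_mul_div_gaussDens hA hA hσ0
  obtain ⟨iAB, eAB⟩ := noisyDens_mul_div_gaussDens hA hB hσ0
  obtain ⟨iBB, eBB⟩ := noisyDens_mul_div_gaussDens hB hB hσ0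
  have hsplit : (fun x => (noisyDens A σ x - noisyDens B σ x) ^ 2 / gaussDens d σ x) = fun x =>
      noisyDens A σ x * noisyDens A σ x / gaussDens d σ x
        - 2 * (noisyDens A σ x * noisyDens B σ x / gaussDens d σ x)
        + noisyDens B σ x * noisyDens B σ x / gaussDens d σ x := by
    ext x
    ring
  rw [hsplit]
  refine ⟨(iAA.sub (iAB.const_mul 2)).add iBB, ?_⟩
  rw [integral_add (by exact iAA.sub (iAB.const_mul 2)) iBB,
    integral_sub iAA (iAB.const_mul 2), integral_const_mul, eAA, eAB, eBB]
  have h := ((hasSum_integral_exp_inner hA hA hAb hAb hσ).sub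
    ((hasSum_integral_exp_inner hA hB hAb hBb hσ).mul_left 2)).add
    (hasSum_integral_exp_inner hB hB hBb hBb hσ)
  refine (congrArg (HasSum · _) (funext fun k => ?_)).mpr h
  rw [← mul_div_assoc, ← sub_div, ← add_div, Finset.mul_sum, ← Finset.sum_sub_distrib,
    ← Finset.sum_add_distrib]
  congr 1
  exact Finset.sum_congr rfl fun j _ => by ring

/-- If the moments of the mean-zero curves `C, Γ` (bounded by 1, uniformly
`1/3`-close) agree up to order `ℓ − 1`, then for `σ ≥ 1` the χ² divergence between the noisy
curve distributions is at most `K_ℓ σ^{−2ℓ} ρ(C,Γ)` with `K_ℓ = 12 Σ_{k ≥ ℓ} 2^k / k!`. -/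
theorem chi_squared_moment_bound (d ℓ : ℕ) (hℓ : 1 ≤ ℓ)
    (C Γ : ℝ → EuclideanSpace ℝ (Fin d)) (hCc : Continuous C) (hΓc : Continuous Γ)
    (hC0 : (∫ t in (0:ℝ)..1, C t) = 0) (hΓ0 : (∫ t in (0:ℝ)..1, Γ t) = 0)
    (hclose : ∀ t ∈ Set.Icc (0:ℝ) 1, ‖C t - Γ t‖ ≤ 1 / 3)
    (hCb : ∀ t ∈ Set.Icc (0:ℝ) 1, ‖C t‖ < 1)
    (hΓb : ∀ t ∈ Set.Icc (0:ℝ) 1, ‖Γ t‖ < 1)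
    (hmom : ∀ k : ℕ, 1 ≤ k → k ≤ ℓ - 1 → ∀ j : Fin k → Fin d,
      (∫ t in (0:ℝ)..1, ∏ a : Fin k, C t (j a)) = ∫ t in (0:ℝ)..1, ∏ a : Fin k, Γ t (j a))
    (σ : ℝ) (hσ : 1 ≤ σ) :
    (∫ x, (noisyDens C σ x - noisyDens Γ σ x) ^ 2 / noisyDens C σ x)
      ≤ (12 * ∑' k : ℕ, (2:ℝ) ^ (ℓ + k) / (Nat.factorial (ℓ + k))) / σ ^ (2 * ℓ)
          * ∫ t in (0:ℝ)..1, ‖C t - Γ t‖ ^ 2 := by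
  have hσ0 : 0 < σ := zero_lt_one.trans_le hσ
  obtain ⟨hint, hsum⟩ := integral_sq_noisyDens_sub_div hCc hΓc hCb hΓb hσ
  set ρ := ∫ t in (0:ℝ)..1, ‖C t - Γ t‖ ^ 2 with hρ
  have hρ0 : 0 ≤ ρ := intervalIntegral.integral_nonneg zero_le_one fun t _ => sq_nonneg _
  set T := ∫ x, (noisyDens C σ x - noisyDens Γ σ x) ^ 2 / gaussDens d σ x
  have hlow := half_gaussDens_le_noisyDens hCc hC0 hCb hσ
  have hg := gaussDens_pos d hσ0
  have hle : (∫ x, (noisyDens C σ x - noisyDens Γ σ x) ^ 2 / noisyDens C σ x) ≤ 2 * T := by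
    rw [← integral_const_mul]
    refine integral_mono_of_nonneg (ae_of_all _ fun x => ?_) (hint.const_mul 2)
      (ae_of_all _ fun x => ?_)
    · exact div_nonneg (sq_nonneg _) ((half_pos (hg x)).le.trans (hlow x))
    · calc _ ≤ (noisyDens C σ x - noisyDens Γ σ x) ^ 2 / (gaussDens d σ x / 2) :=
            div_le_div_of_nonneg_left (sq_nonneg _) (half_pos (hg x)) (hlow x)
        _ = _ := by field_simp
  have hzero : ∀ k < ℓ, (∑ j : Fin k → Fin d, (curveMoment C j - curveMoment Γ j) ^ 2)
      / (σ ^ (2 * k) * k.factorial) = 0 := by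
    intro k hk
    rw [Finset.sum_eq_zero, zero_div]
    intro j _
    rcases Nat.eq_zero_or_pos k with rfl | hk0
    · simp [curveMoment]
    · rw [curveMoment, curveMoment, hmom k hk0 (by omega) j, sub_self, sq, mul_zero]
  have htail := (hasSum_nat_add_iff' ℓ).2 hsum
  rw [Finset.sum_eq_zero fun k hk => hzero k (Finset.mem_range.1 hk), sub_zero] at htail
  have hs : Summable fun k : ℕ => (2:ℝ) ^ (ℓ + k) / (Nat.factorial (ℓ + k)) := by
    simpa only [add_comm] using (summable_nat_add_iff ℓ).2 (Real.summable_pow_div_factorial 2)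
  have hT : T ≤ 6 * ρ / σ ^ (2 * ℓ) * ∑' k : ℕ, (2:ℝ) ^ (ℓ + k) / (Nat.factorial (ℓ + k)) := by
    refine hasSum_le (fun k => ?_) htail (hs.hasSum.mul_left _)
    rw [add_comm k ℓ]
    calc _ ≤ 6 * 2 ^ (ℓ + k) * ρ / (σ ^ (2 * ℓ) * (ℓ + k).factorial) := by
          gcongr
          · exact (sum_sq_curveMoment_sub_le hCc hΓc hCb hΓb _).trans
              (mul_le_mul_of_nonneg_right (sq_le_six_mul_two_pow _) hρ0)
          · omega
      _ = _ := by field_simp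
  calc _ ≤ 2 * T := hle
    _ ≤ 2 * (6 * ρ / σ ^ (2 * ℓ) * ∑' k : ℕ, (2:ℝ) ^ (ℓ + k) / (Nat.factorial (ℓ + k))) := by
        gcongr
    _ = _ := by ring
end
end

section
/- Let M = d ≥ 4. For almost every (Lebesgue) matrix C* ∈ ℝ^{(M+1)×d} whose consecutive rows are distinct, with proportional segment lengths p* ∈ ℝ^M and m₃* = μ₃(C*, p*), there exists a neighborhood of C* in ℝ^{(M+1)×d} such that for every C ≠ C* in that neighborhood, the directional derivative of the map C ↦ L_{m₃*}(C, p*) at C in the direction C* − C is strictly negative: (d/ds) L_{m₃*}(C + s(C* − C), p*) |_{s=0} < 0. -/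
open MeasureTheory Filter Set
noncomputable section

/-- Relaxed third moment `μ₃(C, p)` of a matrix of row-stacked vertices `C` with weights `p`:
`μ₃(C,p)_{jkl} = Σ_i p_i [(1/12)(c_{i−1}+c_i)_j(c_{i−1}+c_i)_k(c_{i−1}+c_i)_l
 + (1/6)(c_{i−1})_j(c_{i−1})_k(c_{i−1})_l + (1/6)(c_i)_j(c_i)_k(c_i)_l]`. -/
def mu3 {M d : ℕ} (C : Fin (M + 1) → EuclideanSpace ℝ (Fin d)) (p : Fin M → ℝ)
    (j k l : Fin d) : ℝ :=
  ∑ i : Fin M, p i *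
    ((1 / 12) * ((C i.castSucc j + C i.succ j) * (C i.castSucc k + C i.succ k)
        * (C i.castSucc l + C i.succ l))
      + (1 / 6) * (C i.castSucc j * C i.castSucc k * C i.castSucc l)
      + (1 / 6) * (C i.succ j * C i.succ k * C i.succ l))

/-- Third moment loss `L_m(C, p) = Σ_{jkl} (μ₃(C,p)_{jkl} − m_{jkl})²`. -/
def Lloss {M d : ℕ} (m : Fin d → Fin d → Fin d → ℝ)
    (C : Fin (M + 1) → EuclideanSpace ℝ (Fin d)) (p : Fin M → ℝ) : ℝ :=
  ∑ j : Fin d, ∑ k : Fin d, ∑ l : Fin d, (mu3 C p j k l - m j k l) ^ 2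

/-- Proportional segment lengths `p_i = ‖c_i − c_{i−1}‖ / Σ_k ‖c_k − c_{k−1}‖` of a matrix of
row-stacked vertices. -/
def propSeg {M d : ℕ} (C : Fin (M + 1) → EuclideanSpace ℝ (Fin d)) (i : Fin M) : ℝ :=
  ‖C i.succ - C i.castSucc‖ / ∑ k : Fin M, ‖C k.succ - C k.castSucc‖


/-- The cubic expression `Σ_i p_i [(1/12)(a_{i-1}+a_i)²(w_{i-1}+w_i) + (1/6)a_{i-1}²w_{i-1} +
(1/6)a_i²w_i]`: a third of the value at a point of the cubic form attached to the derivative of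
`mu3` at vertices taking the values `a`, in a direction taking the values `w`. -/
def cubicPairing {n : ℕ} (p : Fin n → ℝ) (a w : Fin (n + 1) → ℝ) : ℝ :=
  ∑ i : Fin n, p i *
    ((1 / 12) * ((a i.castSucc + a i.succ) ^ 2 * (w i.castSucc + w i.succ))
      + (1 / 6) * (a i.castSucc ^ 2 * w i.castSucc) + (1 / 6) * (a i.succ ^ 2 * w i.succ))

/-- The quadratic forms attached to the linear forms `ℓ` and the weights `p` have no nontrivial
linear syzygy. -/
def SyzygyFree {n d : ℕ} (p : Fin n → ℝ) (ℓ : Fin (n + 1) → Fin d → ℝ) : Prop :=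
  ∀ h : Fin (n + 1) → Fin d → ℝ,
    (∀ x : Fin d → ℝ, cubicPairing p (fun j => ℓ j ⬝ᵥ x) (fun j => h j ⬝ᵥ x) = 0) → h = 0

theorem cubicPairing_add_smul {n : ℕ} (p : Fin n → ℝ) (a u v : Fin (n + 1) → ℝ) (c : ℝ) :
    cubicPairing p a (fun j => u j + c * v j) = cubicPairing p a u + c * cubicPairing p a v := by
  simp only [cubicPairing, Finset.mul_sum, ← Finset.sum_add_distrib]
  exact Finset.sum_congr rfl fun i _ => by ring

theorem continuous_cubicPairing {n : ℕ} (p : Fin n → ℝ) (a : Fin (n + 1) → ℝ) :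
    Continuous (cubicPairing p a) := by
  unfold cubicPairing
  fun_prop

theorem cubicPairing_succ {n : ℕ} (p : Fin (n + 1) → ℝ) (a w : Fin (n + 2) → ℝ) :
    cubicPairing p a w = cubicPairing (Fin.init p) (Fin.init a) (Fin.init w)
      + p (Fin.last n) * ((1 / 12) * ((a (Fin.last n).castSucc + a (Fin.last (n + 1))) ^ 2
          * (w (Fin.last n).castSucc + w (Fin.last (n + 1))))
        + (1 / 6) * (a (Fin.last n).castSucc ^ 2 * w (Fin.last n).castSucc)
        + (1 / 6) * (a (Fin.last (n + 1)) ^ 2 * w (Fin.last (n + 1)))) := by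
  simp only [cubicPairing, Fin.sum_univ_castSucc (n := n), Fin.init, Fin.succ_castSucc,
    Fin.succ_last]

theorem dotProduct_snoc {n : ℕ} (u : Fin (n + 1) → ℝ) (x : Fin n → ℝ) (y : ℝ) :
    u ⬝ᵥ (Fin.snoc x y : Fin (n + 1) → ℝ) = Fin.init u ⬝ᵥ x + u (Fin.last n) * y := by
  simp [dotProduct, Fin.sum_univ_castSucc, Fin.init]

theorem cubic_coeff_eq_zero {A B C D : ℝ} (h : ∀ y : ℝ, A + y * B + y ^ 2 * C + y ^ 3 * D = 0) :
    A = 0 ∧ B = 0 ∧ C = 0 ∧ D = 0 := by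
  have h0 := h 0
  have h1 := h 1
  have h2 := h (-1)
  have h3 := h 2
  refine ⟨?_, ?_, ?_, ?_⟩ <;> linarith

/-- The limit, as `ε → 0`, of the pairing obtained by appending the linear form `y / ε` with
weight `ε²` is nondegenerate. -/
theorem SyzygyFree.eq_zero_of_limit {n d : ℕ} (hd : 0 < d) {p : Fin n → ℝ}
    {ℓ : Fin (n + 1) → Fin d → ℝ} (hℓ : SyzygyFree p ℓ) {h : Fin (n + 2) → Fin (d + 1) → ℝ}
    (hh : ∀ (x : Fin d → ℝ) (y : ℝ),
      cubicPairing p (fun j => ℓ j ⬝ᵥ x)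
          (fun j => h j.castSucc ⬝ᵥ (Fin.snoc x y : Fin (d + 1) → ℝ))
        + (1 / 12) * (y ^ 2 * (h (Fin.last n).castSucc ⬝ᵥ (Fin.snoc x y : Fin (d + 1) → ℝ)
          + h (Fin.last (n + 1)) ⬝ᵥ (Fin.snoc x y : Fin (d + 1) → ℝ)))
        + (1 / 6) * (y ^ 2 * (h (Fin.last (n + 1)) ⬝ᵥ (Fin.snoc x y : Fin (d + 1) → ℝ))) = 0) :
    h = 0 := by
  have key (x : Fin d → ℝ) := cubic_coeff_eq_zero
    (A := cubicPairing p (fun j => ℓ j ⬝ᵥ x) (fun j => Fin.init (h j.castSucc) ⬝ᵥ x))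
    (B := cubicPairing p (fun j => ℓ j ⬝ᵥ x) (fun j => h j.castSucc (Fin.last d)))
    (C := (1 / 12) * (Fin.init (h (Fin.last n).castSucc) ⬝ᵥ x
      + Fin.init (h (Fin.last (n + 1))) ⬝ᵥ x) + (1 / 6) * (Fin.init (h (Fin.last (n + 1))) ⬝ᵥ x))
    (D := (1 / 12) * (h (Fin.last n).castSucc (Fin.last d) + h (Fin.last (n + 1)) (Fin.last d))
      + (1 / 6) * h (Fin.last (n + 1)) (Fin.last d)) (fun y => by
        have := hh x y
        simp only [dotProduct_snoc] at this
        simp only [mul_comm _ y, cubicPairing_add_smul] at this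
        linarith)
  have hinit : (fun j : Fin (n + 1) => (Fin.init (h j.castSucc) : Fin d → ℝ)) = 0 :=
    hℓ _ fun x => (key x).1
  have hlast : (fun j : Fin (n + 1) => h j.castSucc (Fin.last d)) = 0 := by
    have := hℓ (fun j => Pi.single ⟨0, hd⟩ (h j.castSucc (Fin.last d))) fun x => by
      have hB := cubicPairing_add_smul p (fun j => ℓ j ⬝ᵥ x) 0
        (fun j => h j.castSucc (Fin.last d)) (x ⟨0, hd⟩)
      have h0 := cubicPairing_add_smul p (fun j => ℓ j ⬝ᵥ x) 0 0 (-1)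
      simp only [(key x).2.1, Pi.zero_apply, zero_add, mul_zero] at hB h0
      simp only [single_dotProduct, mul_comm _ (x ⟨0, hd⟩)]
      rw [hB]
      change cubicPairing p _ (0 : Fin (n + 1) → ℝ) = _ at h0
      linarith
    funext j
    simpa using congrFun (congrFun this j) ⟨0, hd⟩
  have hinit_last : (Fin.init (h (Fin.last (n + 1))) : Fin d → ℝ) = 0 := by
    funext k
    have hC := (key (Pi.single k 1)).2.2.1
    have := congrFun (congrFun hinit (Fin.last n)) k
    simp only [dotProduct_single, Pi.zero_apply] at hC this
    simp only [Pi.zero_apply]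
    linarith
  have hlast_last : h (Fin.last (n + 1)) (Fin.last d) = 0 := by
    have hD := (key 0).2.2.2
    have := congrFun hlast (Fin.last n)
    simp only [Pi.zero_apply] at this
    linarith
  funext j k
  induction j using Fin.lastCases with
  | last =>
    induction k using Fin.lastCases with
    | last => exact hlast_last
    | cast k => exact congrFun hinit_last k
  | cast j =>
    induction k using Fin.lastCases with
    | last => exact congrFun hlast j
    | cast k => exact congrFun (congrFun hinit j) k

/-- A syzygy-free configuration extends to one more linear form in one more variable. -/
theorem SyzygyFree.exists_snoc {n d : ℕ} (hd : 0 < d) {p : Fin n → ℝ}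
    {ℓ : Fin (n + 1) → Fin d → ℝ} (hℓ : SyzygyFree p ℓ) :
    ∃ ε : ℝ, ε ≠ 0 ∧ SyzygyFree (Fin.snoc p (ε ^ 2) : Fin (n + 1) → ℝ)
      (Fin.snoc (fun j => (Fin.snoc (ℓ j) 0 : Fin (d + 1) → ℝ))
        (Fin.snoc (0 : Fin d → ℝ) ε⁻¹ : Fin (d + 1) → ℝ) : Fin (n + 2) → Fin (d + 1) → ℝ) := by
  by_contra! hcon
  let K (ε : ℝ) (h : Fin (n + 2) → Fin (d + 1) → ℝ) (x : Fin d → ℝ) (y : ℝ) : ℝ :=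
    cubicPairing p (fun j => ℓ j ⬝ᵥ x)
          (fun j => h j.castSucc ⬝ᵥ (Fin.snoc x y : Fin (d + 1) → ℝ))
        + (1 / 12) * ((ε * (ℓ (Fin.last n) ⬝ᵥ x) + y) ^ 2
          * (h (Fin.last n).castSucc ⬝ᵥ (Fin.snoc x y : Fin (d + 1) → ℝ)
          + h (Fin.last (n + 1)) ⬝ᵥ (Fin.snoc x y : Fin (d + 1) → ℝ)))
        + (1 / 6) * (ε ^ 2 * (ℓ (Fin.last n) ⬝ᵥ x) ^ 2
          * (h (Fin.last n).castSucc ⬝ᵥ (Fin.snoc x y : Fin (d + 1) → ℝ)))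
        + (1 / 6) * (y ^ 2 * (h (Fin.last (n + 1)) ⬝ᵥ (Fin.snoc x y : Fin (d + 1) → ℝ)))
  have hKc (x y) : Continuous fun q : ℝ × (Fin (n + 2) → Fin (d + 1) → ℝ) => K q.1 q.2 x y := by
    have hdot (j : Fin (n + 2)) : Continuous fun q : ℝ × (Fin (n + 2) → Fin (d + 1) → ℝ) =>
        q.2 j ⬝ᵥ (Fin.snoc x y : Fin (d + 1) → ℝ) := by
      unfold dotProduct
      fun_prop
    have := (continuous_cubicPairing p (fun j => ℓ j ⬝ᵥ x)).comp
      (continuous_pi fun j : Fin (n + 1) => hdot j.castSucc)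
    simp only [Function.comp_def] at this
    have h1 := hdot (Fin.last n).castSucc
    have h2 := hdot (Fin.last (n + 1))
    simp only [K]
    fun_prop
  have hbad (ε : ℝ) (hε : ε ≠ 0) : ∃ h ∈ Metric.sphere (0 : Fin (n + 2) → Fin (d + 1) → ℝ) 1,
      ∀ x y, K ε h x y = 0 := by
    have := hcon ε hε
    simp only [SyzygyFree, not_forall] at this
    obtain ⟨h, hh, hne⟩ := this
    have hK (x y) : K ε h x y = 0 := by
      rw [← hh (Fin.snoc x y), cubicPairing_succ]
      have hp : Fin.init (Fin.snoc p (ε ^ 2) : Fin (n + 1) → ℝ) = p := Fin.init_snoc _ _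
      have hw : Fin.init (fun j : Fin (n + 2) => h j ⬝ᵥ (Fin.snoc x y : Fin (d + 1) → ℝ))
        = fun j : Fin (n + 1) => h j.castSucc ⬝ᵥ (Fin.snoc x y : Fin (d + 1) → ℝ) := rfl
      have ha : Fin.init (fun j : Fin (n + 2) => (Fin.snoc
          (fun j => (Fin.snoc (ℓ j) 0 : Fin (d + 1) → ℝ))
          (Fin.snoc (0 : Fin d → ℝ) ε⁻¹ : Fin (d + 1) → ℝ) : Fin (n + 2) → Fin (d + 1) → ℝ) j
            ⬝ᵥ (Fin.snoc x y : Fin (d + 1) → ℝ)) = fun j : Fin (n + 1) => ℓ j ⬝ᵥ x := by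
        funext j
        simp [Fin.init, dotProduct_snoc, -Fin.init_snoc]
        simp [Fin.init_snoc]
      rw [hp, hw, ha]
      simp only [Fin.snoc_last, Fin.snoc_castSucc, dotProduct_snoc (Fin.snoc _ _), Fin.init_snoc,
        zero_dotProduct, K]
      field_simp
      ring
    refine ⟨‖h‖⁻¹ • h, ?_, fun x y => ?_⟩
    · simp [norm_smul, hne]
    · have h0 := cubicPairing_add_smul p (fun j => ℓ j ⬝ᵥ x) 0 0 (-1)
      have hB := cubicPairing_add_smul p (fun j => ℓ j ⬝ᵥ x) 0
        (fun j => h j.castSucc ⬝ᵥ (Fin.snoc x y : Fin (d + 1) → ℝ)) ‖h‖⁻¹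
      have := hK x y
      simp only [Pi.zero_apply, zero_add, mul_zero] at hB h0
      simp only [K, Pi.smul_apply, smul_dotProduct, smul_eq_mul, hB] at this ⊢
      change cubicPairing p _ (0 : Fin (n + 1) → ℝ) = _ at h0
      have h00 : cubicPairing p (fun j => ℓ j ⬝ᵥ x) (0 : Fin (n + 1) → ℝ) = 0 := by linarith
      rw [h00]
      linear_combination ‖h‖⁻¹ * this
  choose! H hHs hHK using hbad
  have hε (k : ℕ) : (1 / ((k : ℝ) + 1)) ≠ 0 := by positivity
  obtain ⟨h, hmem, φ, hφ, hlim⟩ :=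
    (isCompact_sphere (0 : Fin (n + 2) → Fin (d + 1) → ℝ) 1).tendsto_subseq
      (fun k : ℕ => hHs _ (hε k))
  have hlim0 := (tendsto_one_div_add_atTop_nhds_zero_nat (𝕜 := ℝ)).comp hφ.tendsto_atTop
  have hK0 (x y) : K 0 h x y = 0 :=
    tendsto_nhds_unique (((hKc x y).tendsto (0, h)).comp (hlim0.prodMk_nhds hlim))
      (tendsto_const_nhds.congr fun k => (hHK _ (hε (φ k)) x y).symm)
  have : h = 0 := hℓ.eq_zero_of_limit hd fun x y => by
    rw [← hK0 x y]
    simp [K]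
  simp [this] at hmem

set_option maxHeartbeats 400000 in
theorem syzygyFree_four : SyzygyFree (![1, -1, 1, -1] : Fin 4 → ℝ)
    ![![1, 0, 0, 0], ![0, 1, 0, 0], ![0, 0, 0, 0], ![0, 0, 1, 0], ![0, 0, 0, 1]] := by
  intro h hh
  have e (a b c d : ℝ) := hh ![a, b, c, d]
  simp [cubicPairing, Fin.sum_univ_succ, dotProduct] at e
  have epooo := e 1 0 0 0
  have eopoo := e 0 1 0 0
  have eoopo := e 0 0 1 0
  have eooop := e 0 0 0 1
  have eppoo := e 1 1 0 0
  have epmoo := e 1 (-1) 0 0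
  have epopo := e 1 0 1 0
  have epomo := e 1 0 (-1) 0
  have epoop := e 1 0 0 1
  have epoom := e 1 0 0 (-1)
  have eoppo := e 0 1 1 0
  have eopmo := e 0 1 (-1) 0
  have eopop := e 0 1 0 1
  have eopom := e 0 1 0 (-1)
  have eoopp := e 0 0 1 1
  have eoopm := e 0 0 1 (-1)
  have epppo := e 1 1 1 0
  have eppop := e 1 1 0 1
  have epopp := e 1 0 1 1
  have eoppp := e 0 1 1 1
  norm_num at epooo eopoo eoopo eooop eppoo epmoo epopo epomo epoop epoom
  norm_num at eoppo eopmo eopop eopom eoopp eoopm epppo eppop epopp eoppp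
  funext j k
  fin_cases j <;> fin_cases k <;> simp
  · linear_combination (11/3) * epooo + 20/3 * eopoo + 5/3 * eoopo + 5/3 * eooop - 2/3 * eppoo + 2
      * epmoo + 1/3 * epopo + 2/3 * epomo - 2/3 * epoop - 1/3 * epoom + 4/3 * eoppo + 8/3 * eopmo
      - 8/3 * eopop - 4/3 * eopom - 5/3 * eoopp + 1/3 * epopp + 4/3 * eoppp
  · linear_combination (9) * eopoo + 3 * eoopo + 3 * eooop + 3 * eoppo + 6 * eopmo - 6 * eopop - 3
      * eopom - 3 * eoopp + 3 * eoppp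
  · linear_combination (-3) * epooo - 3 * eopoo - 9 * eoopo + 3 * eppoo + 6 * epopo - 3 * epomo +
      3 * eoppo - 3 * epppo
  · linear_combination (-3) * epooo - 3 * eopoo - 9 * eooop + 3 * eppoo + 6 * epoop - 3 * epoom +
      3 * eopop - 3 * eppop
  · linear_combination (1) * epooo - 20 * eopoo - 5 * eoopo - 5 * eooop + 2 * eppoo - 6 * epmoo -
      1 * epopo - 2 * epomo + 2 * epoop + 1 * epoom - 4 * eoppo - 8 * eopmo + 8 * eopop + 4 *
      eopom + 5 * eoopp - 1 * epopp - 4 * eoppp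
  · linear_combination (-28/3) * epooo - 37/3 * eopoo - 7/3 * eoopo - 7/3 * eooop + 10/3 * eppoo +
      2 * epmoo + 4/3 * epopo + 8/3 * epomo - 8/3 * epoop - 4/3 * epoom - 11/3 * eoppo - 22/3 *
      eopmo + 22/3 * eopop + 11/3 * eopom + 7/3 * eoopp + 4/3 * epopp - 11/3 * eoppp
  · linear_combination (9) * epooo + 9 * eopoo + 15 * eoopo - 9 * eppoo - 12 * epopo + 3 * epomo -
      9 * eoppo + 9 * epppo
  · linear_combination (9) * epooo + 9 * eopoo + 15 * eooop - 9 * eppoo - 12 * epoop + 3 * epoom -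
      9 * eopop + 9 * eppop
  · linear_combination (-3) * epooo + 3 * eoopo + 3 * eooop + 3 * epopo + 6 * epomo - 6 * epoop -
      3 * epoom - 3 * eoopp + 3 * epopp
  · linear_combination (-3) * eopoo + 3 * eoopo + 3 * eooop + 3 * eoppo + 6 * eopmo - 6 * eopop -
      3 * eopom - 3 * eoopp + 3 * eoppp
  · linear_combination (-3) * epooo - 3 * eopoo + 3 * eoopo + 3 * eppoo + 6 * epopo - 3 * epomo -
      3 * eoppo + 6 * eopmo - 3 * epppo
  · linear_combination (-3) * epooo - 3 * eopoo + 3 * eooop + 3 * eppoo + 6 * epoop - 3 * epoom -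
      3 * eopop + 6 * eopom - 3 * eppop
  · linear_combination (-15) * epooo - 9 * eoopo - 9 * eooop + 9 * epopo + 12 * epoop + 3 * epoom
      + 9 * eoopp - 9 * epopp
  · linear_combination (-15) * eopoo - 9 * eoopo - 9 * eooop + 9 * eoppo + 12 * eopop + 3 * eopom
      + 9 * eoopp - 9 * eoppp
  · linear_combination (7/3) * epooo + 7/3 * eopoo + 37/3 * eoopo + 28/3 * eooop - 7/3 * eppoo -
      22/3 * epopo + 11/3 * epomo + 8/3 * epoop - 4/3 * epoom + 11/3 * eoppo - 22/3 * eopmo - 4/3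
      * eopop + 8/3 * eopom - 10/3 * eoopp + 2 * eoopm + 11/3 * epppo - 4/3 * eppop
  · linear_combination (5) * epooo + 5 * eopoo + 20 * eoopo - 1 * eooop - 5 * eppoo - 8 * epopo +
      4 * epomo - 2 * epoop + 1 * epoom + 4 * eoppo - 8 * eopmo + 1 * eopop - 2 * eopom - 2 *
      eoopp - 6 * eoopm + 4 * epppo + 1 * eppop
  · linear_combination (9) * epooo + 3 * eoopo + 3 * eooop - 3 * epopo - 6 * epoop - 3 * epoom - 3
      * eoopp + 3 * epopp
  · linear_combination (9) * eopoo + 3 * eoopo + 3 * eooop - 3 * eoppo - 6 * eopop - 3 * eopom - 3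
      * eoopp + 3 * eoppp
  · linear_combination (-3) * epooo - 3 * eopoo - 9 * eoopo + 3 * eppoo + 6 * epopo - 3 * epomo -
      3 * eoppo + 6 * eopmo - 3 * epppo
  · linear_combination (-5/3) * epooo - 5/3 * eopoo - 20/3 * eoopo - 11/3 * eooop + 5/3 * eppoo +
      8/3 * epopo - 4/3 * epomo + 2/3 * epoop - 1/3 * epoom - 4/3 * eoppo + 8/3 * eopmo - 1/3 *
      eopop + 2/3 * eopom + 2/3 * eoopp + 2 * eoopm - 4/3 * epppo - 1/3 * eppop

/-- For every `d ≥ 4` there is a syzygy-free configuration with nonzero weights and linearly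
independent edges. -/
theorem exists_syzygyFree {d : ℕ} (hd : 4 ≤ d) :
    ∃ (p : Fin d → ℝ) (ℓ : Fin (d + 1) → Fin d → ℝ), SyzygyFree p ℓ ∧ (∀ i, p i ≠ 0) ∧
      ∀ x : Fin d → ℝ, (∀ i : Fin d, ℓ i.succ ⬝ᵥ x - ℓ i.castSucc ⬝ᵥ x = 0) → x = 0 := by
  induction d, hd using Nat.le_induction with
  | base =>
    refine ⟨_, _, syzygyFree_four, ?_, fun x hx => ?_⟩
    · intro i
      fin_cases i <;> simp
    · have h0 := hx 0
      have h1 := hx 1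
      have h2 := hx 2
      have h3 := hx 3
      simp [dotProduct, Fin.sum_univ_succ] at h0 h1 h2 h3
      funext i
      fin_cases i <;> simp <;> linarith
  | succ d hd ih =>
    obtain ⟨p, ℓ, hℓ, hp, hx⟩ := ih
    obtain ⟨ε, hε, h⟩ := hℓ.exists_snoc (by omega)
    refine ⟨_, _, h, ?_, fun x hx' => ?_⟩
    · intro i
      induction i using Fin.lastCases <;> simp [hp, hε]
    · obtain ⟨x, y, rfl⟩ : ∃ (x₀ : Fin d → ℝ) (y : ℝ), x = Fin.snoc x₀ y :=
        ⟨_, _, (Fin.snoc_init_self x).symm⟩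
      have hx0 : x = 0 := hx x fun i => by
        have := hx' i.castSucc
        simpa [Fin.succ_castSucc, dotProduct_snoc, -Fin.castSucc_succ] using this
      have := hx' (Fin.last d)
      simp [dotProduct_snoc, hx0, hε] at this
      funext i
      induction i using Fin.lastCases <;> simp [hx0, this]

/-- A real-analytic function on a finite-dimensional space which is nonzero somewhere is nonzero
almost everywhere. -/
theorem ae_ne_zero_of_contDiff_omega {Z : Type*} [NormedAddCommGroup Z] [NormedSpace ℝ Z]
    [FiniteDimensional ℝ Z] [MeasurableSpace Z] [BorelSpace Z] (μ : Measure Z)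
    [μ.IsAddHaarMeasure] {f : Z → ℝ} (hf : ContDiff ℝ ⊤ f) {z₀ : Z} (hz₀ : f z₀ ≠ 0) :
    ∀ᵐ z ∂μ, f z ≠ 0 := by
  have hline (z : Z) : ∀ᵐ t : ℝ, f (z₀ + t • z) ≠ 0 := by
    have han : AnalyticOnNhd ℝ (fun t : ℝ => f (z₀ + t • z)) Set.univ := by
      apply ContDiff.analyticOnNhd
      fun_prop
    have := han.preimage_zero_mem_codiscrete (x := 0) (by simpa using hz₀)
    have h2 := ae_restrict_le_codiscreteWithin (μ := (volume : Measure ℝ)) MeasurableSet.univ this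
    rw [Measure.restrict_univ] at h2
    filter_upwards [h2] with t ht
    simpa using ht
  have hmeas : MeasurableSet {q : Z × ℝ | f (z₀ + q.2 • q.1) ≠ 0} := by
    have := hf.continuous
    have h : Continuous fun q : Z × ℝ => f (z₀ + q.2 • q.1) := by fun_prop
    exact (isOpen_ne_fun h continuous_const).measurableSet
  have hswap : ∀ᵐ t : ℝ, ∀ᵐ z ∂μ, f (z₀ + t • z) ≠ 0 :=
    (Measure.ae_ae_comm hmeas).1 (Eventually.of_forall hline)
  obtain ⟨t, ht, ht0⟩ := (hswap.and (Measure.ae_ne volume (0 : ℝ))).exists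
  have h1 : ∀ᵐ z ∂μ, f (z₀ + z) ≠ 0 := by
    rw [ae_iff] at ht ⊢
    have := Measure.addHaar_preimage_smul μ ht0 {z | ¬ f (z₀ + z) ≠ 0}
    simp only [Set.preimage_ofPred_eq] at this
    rw [this] at ht
    simpa [ht0] using ht
  rw [ae_iff] at h1 ⊢
  rw [← measure_preimage_add μ z₀]
  exact h1

/-- The derivative of `mu3` at `C` in the direction `h`. -/
def dmu3 {M d : ℕ} (C : Fin (M + 1) → EuclideanSpace ℝ (Fin d)) (p : Fin M → ℝ)
    (h : Fin (M + 1) → EuclideanSpace ℝ (Fin d)) (j k l : Fin d) : ℝ :=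
  ∑ i : Fin M, p i *
    ((1 / 12) * (((h i.castSucc j + h i.succ j) * (C i.castSucc k + C i.succ k)
            + (C i.castSucc j + C i.succ j) * (h i.castSucc k + h i.succ k))
          * (C i.castSucc l + C i.succ l)
        + (C i.castSucc j + C i.succ j) * (C i.castSucc k + C i.succ k)
          * (h i.castSucc l + h i.succ l))
      + (1 / 6) * ((h i.castSucc j * C i.castSucc k + C i.castSucc j * h i.castSucc k)
          * C i.castSucc l + C i.castSucc j * C i.castSucc k * h i.castSucc l)
      + (1 / 6) * ((h i.succ j * C i.succ k + C i.succ j * h i.succ k)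
          * C i.succ l + C i.succ j * C i.succ k * h i.succ l))

theorem hasDerivAt_mu3_line {M d : ℕ} (C h : Fin (M + 1) → EuclideanSpace ℝ (Fin d))
    (p : Fin M → ℝ) (j k l : Fin d) :
    HasDerivAt (fun t : ℝ => mu3 (C + t • h) p j k l) (dmu3 C p h j k l) 0 := by
  have hc (i : Fin (M + 1)) (j : Fin d) :
      HasDerivAt (fun t : ℝ => (C + t • h) i j) (h i j) 0 := by
    simpa using ((hasDerivAt_id (0 : ℝ)).mul_const (h i j)).const_add (C i j)
  unfold mu3 dmu3
  refine HasDerivAt.fun_sum fun i _ => HasDerivAt.const_mul _ ?_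
  have hs (j : Fin d) := (hc i.castSucc j).fun_add (hc i.succ j)
  have := ((((hs j).fun_mul (hs k)).fun_mul (hs l)).const_mul (1 / 12)).fun_add
    ((((hc i.castSucc j).fun_mul (hc i.castSucc k)).fun_mul
      (hc i.castSucc l)).const_mul (1 / 6)) |>.fun_add
    ((((hc i.succ j).fun_mul (hc i.succ k)).fun_mul (hc i.succ l)).const_mul (1 / 6))
  simpa using this

theorem contDiff_mu3 {M d : ℕ} (p : Fin M → ℝ) (j k l : Fin d) {n : WithTop ℕ∞} :
    ContDiff ℝ n fun C : Fin (M + 1) → EuclideanSpace ℝ (Fin d) => mu3 C p j k l := by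
  unfold mu3
  fun_prop

theorem contDiff_dmu3 {M d : ℕ} (h : Fin (M + 1) → EuclideanSpace ℝ (Fin d)) (j k l : Fin d)
    {n : WithTop ℕ∞} :
    ContDiff ℝ n fun q : (Fin (M + 1) → EuclideanSpace ℝ (Fin d)) × (Fin M → ℝ) =>
      dmu3 q.1 q.2 h j k l := by
  unfold dmu3
  fun_prop

theorem sum_mul_cube {d : ℕ} (u v w x : Fin d → ℝ) :
    ∑ j, ∑ k, ∑ l, x j * x k * x l * (u j * v k * w l)
      = (∑ j, u j * x j) * (∑ j, v j * x j) * (∑ j, w j * x j) := by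
  rw [Finset.sum_mul_sum, Finset.sum_mul]
  refine Finset.sum_congr rfl fun j _ => ?_
  rw [Finset.sum_mul]
  refine Finset.sum_congr rfl fun k _ => ?_
  rw [Finset.mul_sum]
  exact Finset.sum_congr rfl fun l _ => by ring

theorem sum_rotate {ι κ : Type*} [Fintype ι] [Fintype κ] (f : κ → κ → κ → ι → ℝ) :
    ∑ j, ∑ k, ∑ l, ∑ i, f j k l i = ∑ i, ∑ j, ∑ k, ∑ l, f j k l i := by
  calc _ = ∑ j, ∑ k, ∑ i, ∑ l, f j k l i :=
        Finset.sum_congr rfl fun j _ => Finset.sum_congr rfl fun k _ => Finset.sum_comm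
    _ = ∑ j, ∑ i, ∑ k, ∑ l, f j k l i := Finset.sum_congr rfl fun j _ => Finset.sum_comm
    _ = _ := Finset.sum_comm

theorem sum_dmu3_eq_cubicPairing {M d : ℕ} (C h : Fin (M + 1) → EuclideanSpace ℝ (Fin d))
    (p : Fin M → ℝ) (x : EuclideanSpace ℝ (Fin d)) :
    ∑ j, ∑ k, ∑ l, x j * x k * x l * dmu3 C p h j k l
      = 3 * cubicPairing p (fun j => inner ℝ x (C j)) (fun j => inner ℝ x (h j)) := by
  have hin (v : EuclideanSpace ℝ (Fin d)) : inner ℝ x v = ∑ j, v j * x j := by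
    simp [PiLp.inner_apply]
  have hterm (u w : EuclideanSpace ℝ (Fin d)) :
      ∑ j, ∑ k, ∑ l, x j * x k * x l * ((w j * u k + u j * w k) * u l + u j * u k * w l)
        = 3 * (inner ℝ x u ^ 2 * inner ℝ x w) := by
    have h1 := sum_mul_cube w u u x
    have h2 := sum_mul_cube u w u x
    have h3 := sum_mul_cube u u w x
    simp only [hin]
    calc _ = ∑ j, ∑ k, ∑ l, (x j * x k * x l * (w j * u k * u l)
          + x j * x k * x l * (u j * w k * u l) + x j * x k * x l * (u j * u k * w l)) := by
          refine Finset.sum_congr rfl fun j _ => Finset.sum_congr rfl fun k _ =>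
            Finset.sum_congr rfl fun l _ => by ring
      _ = _ := by
          simp only [Finset.sum_add_distrib, h1, h2, h3]
          ring
  have hsum : ∀ j k l, dmu3 C p h j k l = ∑ i : Fin M, p i *
      ((1 / 12) * (((h i.castSucc + h i.succ) j * (C i.castSucc + C i.succ) k
            + (C i.castSucc + C i.succ) j * (h i.castSucc + h i.succ) k)
          * (C i.castSucc + C i.succ) l
        + (C i.castSucc + C i.succ) j * (C i.castSucc + C i.succ) k
          * (h i.castSucc + h i.succ) l)
      + (1 / 6) * ((h i.castSucc j * C i.castSucc k + C i.castSucc j * h i.castSucc k)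
          * C i.castSucc l + C i.castSucc j * C i.castSucc k * h i.castSucc l)
      + (1 / 6) * ((h i.succ j * C i.succ k + C i.succ j * h i.succ k)
          * C i.succ l + C i.succ j * C i.succ k * h i.succ l)) := fun j k l => rfl
  simp only [hsum, Finset.mul_sum, cubicPairing]
  rw [sum_rotate]
  refine Finset.sum_congr rfl fun i _ => ?_
  have h1 := hterm (C i.castSucc + C i.succ) (h i.castSucc + h i.succ)
  have h2 := hterm (C i.castSucc) (h i.castSucc)
  have h3 := hterm (C i.succ) (h i.succ)
  rw [inner_add_right, inner_add_right] at h1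
  calc _ = p i * ((1 / 12) * (3 * ((inner ℝ x (C i.castSucc) + inner ℝ x (C i.succ)) ^ 2
          * (inner ℝ x (h i.castSucc) + inner ℝ x (h i.succ))))
        + (1 / 6) * (3 * (inner ℝ x (C i.castSucc) ^ 2 * inner ℝ x (h i.castSucc)))
        + (1 / 6) * (3 * (inner ℝ x (C i.succ) ^ 2 * inner ℝ x (h i.succ)))) := by
        rw [← h1, ← h2, ← h3]
        simp only [Finset.mul_sum, ← Finset.sum_add_distrib]
        exact Finset.sum_congr rfl fun j _ => Finset.sum_congr rfl fun k _ =>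
          Finset.sum_congr rfl fun l _ => by ring
    _ = _ := by ring

/-- Near a point where the derivative of `F` is injective, moving straight towards that point
decreases the distance of the values of `F`. -/
theorem eventually_inner_fderiv_pos {W T : Type*} [NormedAddCommGroup W] [NormedSpace ℝ W]
    [FiniteDimensional ℝ W] [NormedAddCommGroup T] [InnerProductSpace ℝ T] {F : W → T}
    (hF : ContDiff ℝ 1 F) {x₀ : W} (hinj : ∀ h, fderiv ℝ F x₀ h = 0 → h = 0) :
    ∀ᶠ x in nhds x₀, x ≠ x₀ → 0 < inner ℝ (F x - F x₀) (fderiv ℝ F x (x - x₀)) := by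
  obtain ⟨K, hK, hanti⟩ := (fderiv ℝ F x₀ : W →ₗ[ℝ] T).exists_antilipschitzWith
    (LinearMap.ker_eq_bot'.2 hinj)
  have hδ : (0 : ℝ) < 1 / (4 * K) := by positivity
  have h1 := (hF.differentiable one_ne_zero x₀).hasFDerivAt.isLittleO.def hδ
  have h2 : ∀ᶠ x in nhds x₀, ‖fderiv ℝ F x - fderiv ℝ F x₀‖ < 1 / (4 * K) := by
    have := (hF.continuous_fderiv one_ne_zero).tendsto x₀
    filter_upwards [Metric.tendsto_nhds.1 this _ hδ] with x hx
    rwa [← dist_eq_norm]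
  filter_upwards [h1, h2] with x hx1 hx2 hne
  set h := x - x₀
  set a := fderiv ℝ F x₀ h
  have hh : 0 < ‖h‖ := norm_pos_iff.2 (sub_ne_zero.2 hne)
  have ha : ‖h‖ ≤ K * ‖a‖ := by simpa using hanti.le_mul_norm_sub h 0
  have hK' : (0 : ℝ) < K := hK
  have ha' : 1 / (4 * K) * ‖h‖ ≤ ‖a‖ / 4 := by
    rw [div_mul_eq_mul_div, div_le_iff₀ (by positivity)]
    linarith
  have hapos : 0 < ‖a‖ := by
    by_contra! hcon
    nlinarith
  obtain ⟨u, hu⟩ : ∃ u, u = F x - F x₀ - a := ⟨_, rfl⟩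
  obtain ⟨v, hv⟩ : ∃ v, v = fderiv ℝ F x h - a := ⟨_, rfl⟩
  have hu' : ‖u‖ ≤ ‖a‖ / 4 := hu ▸ hx1.trans ha'
  have hv' : ‖v‖ ≤ ‖a‖ / 4 := by
    refine le_trans ?_ ha'
    have := (fderiv ℝ F x - fderiv ℝ F x₀).le_of_opNorm_le hx2.le h
    rwa [sub_apply, ← hv] at this
  rw [show F x - F x₀ = a + u by rw [hu]; abel, show fderiv ℝ F x h = a + v by rw [hv]; abel,
    inner_add_left, inner_add_right, inner_add_right, real_inner_self_eq_norm_sq]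
  have i1 := (abs_le.1 (abs_real_inner_le_norm a v)).1
  have i2 := (abs_le.1 (abs_real_inner_le_norm u a)).1
  have i3 := (abs_le.1 (abs_real_inner_le_norm u v)).1
  have j1 : ‖a‖ * ‖v‖ ≤ ‖a‖ * (‖a‖ / 4) := by gcongr
  have j2 : ‖u‖ * ‖a‖ ≤ (‖a‖ / 4) * ‖a‖ := by gcongr
  have j3 : ‖u‖ * ‖v‖ ≤ (‖a‖ / 4) * (‖a‖ / 4) := by gcongr
  nlinarith

/-- The third moment as a vector of a Euclidean space, so that the loss is a squared norm. -/
def mu3Vec {M d : ℕ} (p : Fin M → ℝ) (C : Fin (M + 1) → EuclideanSpace ℝ (Fin d)) :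
    EuclideanSpace ℝ (Fin d × Fin d × Fin d) :=
  WithLp.toLp 2 fun t => mu3 C p t.1 t.2.1 t.2.2

theorem contDiff_mu3Vec {M d : ℕ} (p : Fin M → ℝ) {n : WithTop ℕ∞} :
    ContDiff ℝ n (mu3Vec (d := d) p) :=
  contDiff_euclidean.2 fun _ => contDiff_mu3 p _ _ _

theorem fderiv_mu3Vec_apply {M d : ℕ} (p : Fin M → ℝ)
    (C h : Fin (M + 1) → EuclideanSpace ℝ (Fin d)) (t : Fin d × Fin d × Fin d) :
    fderiv ℝ (mu3Vec p) C h t = dmu3 C p h t.1 t.2.1 t.2.2 := by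
  have hF := ((contDiff_mu3Vec (n := 1) p).differentiable one_ne_zero C).hasFDerivAt
  have hline : HasDerivAt (fun s : ℝ => C + s • h) h 0 := by
    simpa using ((hasDerivAt_id (0 : ℝ)).smul_const h).const_add C
  have hcomp := HasFDerivAt.comp_hasDerivAt (0 : ℝ) (f := fun s : ℝ => C + s • h)
    (by simpa using hF) hline
  have ht := (EuclideanSpace.proj (𝕜 := ℝ) t).hasFDerivAt.comp_hasDerivAt (0 : ℝ) hcomp
  exact ht.unique (hasDerivAt_mu3_line C h p _ _ _)

theorem Lloss_mu3_eq_norm_sq {M d : ℕ} (p : Fin M → ℝ)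
    (C C' : Fin (M + 1) → EuclideanSpace ℝ (Fin d)) :
    Lloss (mu3 C p) C' p = ‖mu3Vec p C' - mu3Vec p C‖ ^ 2 := by
  simp [Lloss, EuclideanSpace.norm_sq_eq, Fintype.sum_prod_type, mu3Vec]

theorem exists_nhds_deriv_Lloss_neg {M d : ℕ} (p : Fin M → ℝ)
    (Cstar : Fin (M + 1) → EuclideanSpace ℝ (Fin d))
    (hinj : ∀ h, dmu3 Cstar p h = 0 → h = 0) :
    ∃ U ∈ nhds Cstar, ∀ C ∈ U, C ≠ Cstar →
      deriv (fun s : ℝ => Lloss (mu3 Cstar p) (fun i => C i + s • (Cstar i - C i)) p) 0 < 0 := by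
  have hev := eventually_inner_fderiv_pos (contDiff_mu3Vec (d := d) p) (x₀ := Cstar) fun h hh =>
    hinj h <| by
      funext j k l
      simpa [hh] using (fderiv_mu3Vec_apply p Cstar h (j, k, l)).symm
  refine ⟨_, hev, fun C hC hne => ?_⟩
  have hF := ((contDiff_mu3Vec (n := 1) p).differentiable one_ne_zero C).hasFDerivAt
  have hline : HasDerivAt (fun s : ℝ => C + s • (Cstar - C)) (Cstar - C) 0 := by
    simpa using ((hasDerivAt_id (0 : ℝ)).smul_const (Cstar - C)).const_add C
  have hcomp := HasFDerivAt.comp_hasDerivAt (0 : ℝ) (f := fun s : ℝ => C + s • (Cstar - C))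
    (by simpa using hF) hline
  have hderiv := (hcomp.sub_const (mu3Vec p Cstar)).norm_sq
  have heq : (fun s : ℝ => Lloss (mu3 Cstar p) (fun i => C i + s • (Cstar i - C i)) p)
      = fun s : ℝ => ‖(mu3Vec p ∘ fun s : ℝ => C + s • (Cstar - C)) s - mu3Vec p Cstar‖ ^ 2 :=
    funext fun s => Lloss_mu3_eq_norm_sq p Cstar _
  rw [heq, hderiv.deriv]
  have hpos := hC hne
  rw [← neg_sub Cstar C, map_neg, inner_neg_right] at hpos
  simp only [Function.comp_apply, zero_smul, add_zero]
  linarith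


theorem contDiff_matrix_det {Z ι : Type*} [NormedAddCommGroup Z] [NormedSpace ℝ Z] [Fintype ι]
    [DecidableEq ι] {n : WithTop ℕ∞} {f : Z → Matrix ι ι ℝ}
    (hf : ∀ i j, ContDiff ℝ n fun z => f z i j) : ContDiff ℝ n fun z => (f z).det := by
  simp only [Matrix.det_apply']
  exact ContDiff.sum fun σ _ => contDiff_const.mul (contDiff_prod fun b _ => hf _ _)

/-- The matrix of the derivative of `mu3` with respect to the vertices. -/
def jacMu3 {M d : ℕ} (C : Fin (M + 1) → EuclideanSpace ℝ (Fin d)) (p : Fin M → ℝ) :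
    Matrix (Fin d × Fin d × Fin d) (Fin (M + 1) × Fin d) ℝ :=
  Matrix.of fun t b =>
    dmu3 C p (Pi.single b.1 (EuclideanSpace.single b.2 1)) t.1 t.2.1 t.2.2

/-- The Gram determinant of the derivative of `mu3` with respect to the vertices. -/
def gramMu3 {M d : ℕ} (C : Fin (M + 1) → EuclideanSpace ℝ (Fin d)) (p : Fin M → ℝ) : ℝ :=
  ((jacMu3 C p).transpose * jacMu3 C p).det

theorem contDiff_gramMu3 {M d : ℕ} {n : WithTop ℕ∞} {Z : Type*} [NormedAddCommGroup Z]
    [NormedSpace ℝ Z] {C : Z → Fin (M + 1) → EuclideanSpace ℝ (Fin d)} {p : Z → Fin M → ℝ}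
    (hC : ContDiff ℝ n C) (hp : ContDiff ℝ n p) : ContDiff ℝ n fun z => gramMu3 (C z) (p z) := by
  have hJ (t b) : ContDiff ℝ n fun z => jacMu3 (C z) (p z) t b :=
    (contDiff_dmu3 _ _ _ _).comp (hC.prodMk hp)
  refine contDiff_matrix_det fun a b => ?_
  simp only [Matrix.mul_apply, Matrix.transpose_apply]
  exact ContDiff.sum fun t _ => (hJ t a).mul (hJ t b)

theorem continuous_gramMu3 {M d : ℕ} {Z : Type*} [TopologicalSpace Z]
    {C : Z → Fin (M + 1) → EuclideanSpace ℝ (Fin d)} {p : Z → Fin M → ℝ}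
    (hC : Continuous C) (hp : Continuous p) : Continuous fun z => gramMu3 (C z) (p z) := by
  have : Continuous fun q : (Fin (M + 1) → EuclideanSpace ℝ (Fin d)) × (Fin M → ℝ) =>
      gramMu3 q.1 q.2 := (contDiff_gramMu3 (n := 0) contDiff_fst contDiff_snd).continuous
  simpa only [Function.comp_def] using this.comp (hC.prodMk hp)

/-- `dmu3` as a linear map in the direction. -/
def dmu3Lin {M d : ℕ} (C : Fin (M + 1) → EuclideanSpace ℝ (Fin d)) (p : Fin M → ℝ) :
    (Fin (M + 1) → EuclideanSpace ℝ (Fin d)) →ₗ[ℝ] Fin d → Fin d → Fin d → ℝ where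
  toFun h := dmu3 C p h
  map_add' h h' := by
    funext j k l
    simp only [dmu3, Pi.add_apply, PiLp.add_apply, ← Finset.sum_add_distrib]
    exact Finset.sum_congr rfl fun i _ => by ring
  map_smul' c h := by
    funext j k l
    simp only [dmu3, Pi.smul_apply, PiLp.smul_apply, smul_eq_mul, RingHom.id_apply,
      Finset.mul_sum]
    exact Finset.sum_congr rfl fun i _ => by ring

theorem dmu3Lin_apply {M d : ℕ} (C : Fin (M + 1) → EuclideanSpace ℝ (Fin d)) (p : Fin M → ℝ)
    (h : Fin (M + 1) → EuclideanSpace ℝ (Fin d)) : dmu3Lin C p h = dmu3 C p h := rfl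

theorem jacMu3_mulVec {M d : ℕ} (C : Fin (M + 1) → EuclideanSpace ℝ (Fin d)) (p : Fin M → ℝ)
    (x : Fin (M + 1) × Fin d → ℝ) (t : Fin d × Fin d × Fin d) :
    (jacMu3 C p).mulVec x t
      = dmu3 C p (fun i => WithLp.toLp 2 fun j => x (i, j)) t.1 t.2.1 t.2.2 := by
  have hx : (fun i => WithLp.toLp 2 fun j => x (i, j))
      = ∑ b : Fin (M + 1) × Fin d, x b • (Pi.single b.1 (EuclideanSpace.single b.2 1) :
        Fin (M + 1) → EuclideanSpace ℝ (Fin d)) := by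
    funext i
    ext j
    simp only [Finset.sum_apply, WithLp.ofLp_sum, Pi.smul_apply, PiLp.smul_apply]
    rw [Finset.sum_eq_single (i, j)]
    · simp
    · rintro ⟨i', j'⟩ - hne
      by_cases hi : i = i'
      · subst hi
        have : j ≠ j' := fun h => hne (by rw [h])
        simp [this]
      · simp [hi]
    · simp
  rw [hx, ← dmu3Lin_apply, map_sum]
  simp only [map_smul, Finset.sum_apply, Pi.smul_apply, Matrix.mulVec, dotProduct, smul_eq_mul,
    dmu3Lin_apply, jacMu3, Matrix.of_apply]
  exact Finset.sum_congr rfl fun b _ => mul_comm _ _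

theorem gramMu3_ne_zero_iff {M d : ℕ} (C : Fin (M + 1) → EuclideanSpace ℝ (Fin d))
    (p : Fin M → ℝ) : gramMu3 C p ≠ 0 ↔ ∀ h, dmu3 C p h = 0 → h = 0 := by
  have hker (x : Fin (M + 1) × Fin d → ℝ) :
      ((jacMu3 C p).transpose * jacMu3 C p).mulVec x = 0 ↔ (jacMu3 C p).mulVec x = 0 := by
    have := SetLike.ext_iff.1 (Matrix.ker_mulVecLin_transpose_mul_self (jacMu3 C p)) x
    simpa only [LinearMap.mem_ker, Matrix.mulVecLin_apply] using this
  rw [gramMu3, Ne, ← Matrix.exists_mulVec_eq_zero_iff]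
  push Not
  constructor
  · intro H h hh
    by_contra hne
    refine H (fun b => h b.1 b.2) (fun h0 => hne ?_) ((hker _).2 ?_)
    · funext i
      ext j
      exact congrFun h0 (i, j)
    · funext t
      rw [jacMu3_mulVec]
      exact congrFun (congrFun (congrFun hh t.1) t.2.1) t.2.2
  · intro H x hx h0
    refine hx ?_
    have hJ := (hker x).1 h0
    have := H (fun i => WithLp.toLp 2 fun j => x (i, j)) <| by
      funext j k l
      have := congrFun hJ (j, k, l)
      rwa [jacMu3_mulVec] at this
    funext b
    exact congrArg (fun v : EuclideanSpace ℝ (Fin d) => v b.2) (congrFun this b.1)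

/-- Rescale the edges of a polygonal chain by the factors `s` and translate it by `w`. -/
def stretch {M : ℕ} {E : Type*} [AddCommGroup E] [Module ℝ E] (s : Fin M → ℝ) (w : E)
    (C : Fin (M + 1) → E) : Fin (M + 1) → E := fun j =>
  w + C 0 + ∑ i : Fin M, if i.castSucc < j then s i • (C i.succ - C i.castSucc) else 0

theorem stretch_zero {M : ℕ} {E : Type*} [AddCommGroup E] [Module ℝ E] (s : Fin M → ℝ) (w : E)
    (C : Fin (M + 1) → E) : stretch s w C 0 = w + C 0 := by
  simp [stretch]

theorem stretch_succ_sub_castSucc {M : ℕ} {E : Type*} [AddCommGroup E] [Module ℝ E]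
    (s : Fin M → ℝ) (w : E) (C : Fin (M + 1) → E) (i : Fin M) :
    stretch s w C i.succ - stretch s w C i.castSucc = s i • (C i.succ - C i.castSucc) := by
  rw [stretch, stretch, add_sub_add_left_eq_sub, ← Finset.sum_sub_distrib,
    Finset.sum_eq_single i]
  · simp
  · intro k _ hk
    have : k.castSucc < i.succ ↔ k.castSucc < i.castSucc := by
      rw [Fin.castSucc_lt_succ_iff, Fin.castSucc_lt_castSucc_iff]
      exact ⟨fun h => lt_of_le_of_ne h hk, le_of_lt⟩
    simp [this]
  · simp

/-- `stretch` without translation, as a linear map. -/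
def stretchLin {M : ℕ} {E : Type*} [AddCommGroup E] [Module ℝ E] (s : Fin M → ℝ) :
    (Fin (M + 1) → E) →ₗ[ℝ] Fin (M + 1) → E where
  toFun := stretch s 0
  map_add' C C' := by
    funext j
    simp only [stretch, Pi.add_apply, zero_add]
    rw [add_add_add_comm, ← Finset.sum_add_distrib]
    congr 1
    refine Finset.sum_congr rfl fun i _ => ?_
    split_ifs
    · module
    · simp
  map_smul' c C := by
    funext j
    simp only [stretch, Pi.smul_apply, zero_add, RingHom.id_apply, smul_add, Finset.smul_sum]
    congr 1
    refine Finset.sum_congr rfl fun i _ => ?_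
    split_ifs
    · module
    · simp

theorem stretchLin_injective {M : ℕ} {E : Type*} [AddCommGroup E] [Module ℝ E]
    {s : Fin M → ℝ} (hs : ∀ i, s i ≠ 0) :
    Function.Injective (stretchLin s : (Fin (M + 1) → E) →ₗ[ℝ] Fin (M + 1) → E) := by
  rw [injective_iff_map_eq_zero]
  intro C hC
  have hC' (j) : stretch s 0 C j = 0 := congrFun hC j
  funext j
  induction j using Fin.induction with
  | zero => simpa [stretch_zero] using hC' 0
  | succ i ih =>
    have := stretch_succ_sub_castSucc s 0 C i
    rw [hC', hC', sub_zero, ih] at this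
    simpa [hs i] using this.symm

theorem ae_of_ae_stretch {M d : ℕ} {s : Fin M → ℝ} (hs : ∀ i, s i ≠ 0)
    (w : EuclideanSpace ℝ (Fin d)) {P : (Fin (M + 1) → EuclideanSpace ℝ (Fin d)) → Prop}
    (h : ∀ᵐ C, P (stretch s w C)) : ∀ᵐ C, P C := by
  have hdet : LinearMap.det (stretchLin s : (Fin (M + 1) → EuclideanSpace ℝ (Fin d)) →ₗ[ℝ] _)
      ≠ 0 := by
    have := LinearMap.isUnit_iff_ker_eq_bot (stretchLin s :
      (Fin (M + 1) → EuclideanSpace ℝ (Fin d)) →ₗ[ℝ] _) |>.2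
        (LinearMap.ker_eq_bot.2 (stretchLin_injective hs))
    exact (LinearMap.isUnit_det _ this).ne_zero
  have hst (C : Fin (M + 1) → EuclideanSpace ℝ (Fin d)) :
      stretch s w C = (fun _ => w) + stretchLin s C := by
    funext j
    simp [stretchLin, stretch, add_assoc]
  simp only [hst] at h
  rw [ae_iff] at h ⊢
  rw [← measure_preimage_add volume (fun _ => w)]
  have := Measure.addHaar_preimage_linearMap volume hdet
    ((fun C => (fun _ => w) + C) ⁻¹' {C | ¬ P C})
  rw [show (stretchLin s) ⁻¹' ((fun C => (fun _ => w) + C) ⁻¹' {C | ¬ P C})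
    = {C | ¬ P ((fun _ => w) + stretchLin s C)} from rfl, h] at this
  have h2 := mul_eq_zero.1 this.symm
  simpa [hdet] using h2

/-- Almost every polygonal chain with `d` edges in dimension `d` has linearly independent edges. -/
theorem ae_eq_zero_of_inner_edge {d : ℕ} :
    ∀ᵐ C : Fin (d + 1) → EuclideanSpace ℝ (Fin d),
      ∀ x, (∀ i : Fin d, inner ℝ x (C i.succ - C i.castSucc) = 0) → x = 0 := by
  have hcd : ContDiff ℝ ⊤ fun C : Fin (d + 1) → EuclideanSpace ℝ (Fin d) =>
      (Matrix.of fun i j : Fin d => C i.succ j - C i.castSucc j).det := by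
    refine contDiff_matrix_det fun i j => ?_
    simp only [Matrix.of_apply]
    fun_prop
  have hone : (Matrix.of fun i j : Fin d => (if j.castSucc < i.succ then (1 : ℝ) else 0)
      - if j.castSucc < i.castSucc then (1 : ℝ) else 0) = 1 := by
    ext i j
    simp only [Matrix.of_apply, Matrix.one_apply, Fin.castSucc_lt_succ_iff,
      Fin.castSucc_lt_castSucc_iff]
    rcases lt_trichotomy i j with h | h | h
    · simp [h.ne, h.not_ge, h.not_gt]
    · simp [h]
    · simp [h.ne', h.le, h]
  filter_upwards [ae_ne_zero_of_contDiff_omega volume hcd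
    (z₀ := fun k => WithLp.toLp 2 fun j : Fin d => if j.castSucc < k then (1 : ℝ) else 0)
    (ne_of_eq_of_ne (congrArg Matrix.det hone) (by simp))]
    with C hC x hx
  by_contra hx0
  refine hC (Matrix.exists_mulVec_eq_zero_iff.1 ⟨x, fun h => hx0 (by ext i; exact congrFun h i),
    funext fun i => ?_⟩)
  have := hx i
  simpa [PiLp.inner_apply, Matrix.mulVec, dotProduct] using this

/-- A chain with independent edges can be rescaled so that `mu3` is an immersion there, for the
weights given by the rescaled edge lengths. -/
theorem exists_stretch_dmu3_injective {d : ℕ} (hd : 4 ≤ d)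
    {C : Fin (d + 1) → EuclideanSpace ℝ (Fin d)}
    (hC : ∀ x, (∀ i : Fin d, inner ℝ x (C i.succ - C i.castSucc) = 0) → x = 0) :
    ∃ (s : Fin d → ℝ) (w : EuclideanSpace ℝ (Fin d)), ∀ h,
      dmu3 (stretch s w C) (fun i => s i * ‖C i.succ - C i.castSucc‖) h = 0 → h = 0 := by
  obtain ⟨p, ℓ, hsyz, hp, hℓ⟩ := exists_syzygyFree hd
  have hrank : Module.finrank ℝ (EuclideanSpace ℝ (Fin d)) = Module.finrank ℝ (Fin d → ℝ) := by
    simp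
  have hv (i : Fin d) : C i.succ - C i.castSucc ≠ 0 := by
    let f : EuclideanSpace ℝ (Fin d) →ₗ[ℝ] Fin d → ℝ :=
      LinearMap.pi fun i => innerₗ _ (C i.succ - C i.castSucc)
    have hf : Function.Injective f := (injective_iff_map_eq_zero f).2 fun x hx =>
      hC x fun i => by rw [real_inner_comm]; exact congrFun hx i
    obtain ⟨x, hx⟩ := (LinearMap.injective_iff_surjective_of_finrank_eq_finrank hrank).1 hf
      fun _ => 1
    intro h0
    have : inner ℝ (C i.succ - C i.castSucc) x = 1 := congrFun hx i
    simp [h0] at this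
  let s : Fin d → ℝ := fun i => p i / ‖C i.succ - C i.castSucc‖
  have hs (i) : s i ≠ 0 := div_ne_zero (hp i) (norm_ne_zero_iff.2 (hv i))
  have hsp : (fun i => s i * ‖C i.succ - C i.castSucc‖) = p :=
    funext fun i => div_mul_cancel₀ _ (norm_ne_zero_iff.2 (hv i))
  let f : EuclideanSpace ℝ (Fin d) →ₗ[ℝ] Fin d → ℝ :=
    LinearMap.pi fun i => innerₗ _ (s i • (C i.succ - C i.castSucc))
  have hf : Function.Injective f := (injective_iff_map_eq_zero f).2 fun x hx =>
    hC x fun i => by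
      have : inner ℝ (s i • (C i.succ - C i.castSucc)) x = 0 := congrFun hx i
      rw [real_inner_smul_left] at this
      rw [real_inner_comm]
      exact (mul_eq_zero.1 this).resolve_left (hs i)
  let g : (Fin d → ℝ) →ₗ[ℝ] Fin d → ℝ :=
    Matrix.mulVecLin (Matrix.of fun i => ℓ i.succ - ℓ i.castSucc)
  have hg_apply (y i) : g y i = ℓ i.succ ⬝ᵥ y - ℓ i.castSucc ⬝ᵥ y := by
    rw [← sub_dotProduct]
    rfl
  have hg : Function.Injective g := (injective_iff_map_eq_zero g).2 fun y hy =>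
    hℓ y fun i => by rw [← hg_apply, hy, Pi.zero_apply]
  let B : (Fin d → ℝ) ≃ₗ[ℝ] EuclideanSpace ℝ (Fin d) :=
    LinearEquiv.ofInjectiveEndo g hg ≪≫ₗ (LinearMap.linearEquivOfInjective f hf hrank).symm
  have hB (y) : f (B y) = g y := by
    change LinearMap.linearEquivOfInjective f hf hrank (B y) = g y
    simp [B]
  let φ : EuclideanSpace ℝ (Fin d) →ₗ[ℝ] ℝ :=
    (∑ k, ℓ 0 k • LinearMap.proj k) ∘ₗ B.symm.toLinearMap
  let c := (InnerProductSpace.toDual ℝ (EuclideanSpace ℝ (Fin d))).symm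
    (LinearMap.toContinuousLinearMap φ)
  have hc (y) : inner ℝ c (B y) = ℓ 0 ⬝ᵥ y := by
    simp [c, φ, dotProduct]
  have hst (y j) : inner ℝ (B y) (stretch s (c - C 0) C j) = ℓ j ⬝ᵥ y := by
    induction j using Fin.induction with
    | zero => rw [stretch_zero, sub_add_cancel, real_inner_comm, hc]
    | succ i ih =>
      have h1 := stretch_succ_sub_castSucc s (c - C 0) C i
      have h2 : inner ℝ (s i • (C i.succ - C i.castSucc)) (B y) = g y i := congrFun (hB y) i
      rw [← h1, real_inner_comm, inner_sub_right, ih, hg_apply] at h2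
      linarith
  refine ⟨s, c - C 0, fun h hh => ?_⟩
  rw [hsp] at hh
  have hdot (y : Fin d → ℝ) (j) :
      (fun k => inner ℝ (B fun i => if k = i then 1 else 0) (h j)) ⬝ᵥ y
        = inner ℝ (B y) (h j) := by
    have := LinearMap.pi_apply_eq_sum_univ (innerₗ _ (h j) ∘ₗ B.toLinearMap) y
    simp only [LinearMap.comp_apply, LinearEquiv.coe_coe, innerₗ_apply_apply, smul_eq_mul] at this
    rw [real_inner_comm, this, dotProduct]
    exact Finset.sum_congr rfl fun k _ => by rw [mul_comm, real_inner_comm]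
  have h0 := hsyz (fun j k => inner ℝ (B fun i => if k = i then 1 else 0) (h j)) fun y => by
    have := sum_dmu3_eq_cubicPairing (stretch s (c - C 0) C) h p (B y)
    simp only [hh, Pi.zero_apply, mul_zero, Finset.sum_const_zero, hst] at this
    simp only [hdot]
    linarith
  funext j
  refine ext_inner_left ℝ fun x => ?_
  obtain ⟨y, rfl⟩ := B.surjective x
  rw [← hdot, congrFun h0 j]
  simp

theorem ae_gramMu3_edge_ne_zero {d : ℕ} (hd : 4 ≤ d) :
    ∀ᵐ C : Fin (d + 1) → EuclideanSpace ℝ (Fin d),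
      gramMu3 C (fun i => ‖C i.succ - C i.castSucc‖) ≠ 0 := by
  have hae : ∀ᵐ C : Fin (d + 1) → EuclideanSpace ℝ (Fin d),
      ∀ᵐ q : (Fin d → ℝ) × EuclideanSpace ℝ (Fin d) ∂(volume.prod volume),
        gramMu3 (stretch q.1 q.2 C) (fun i => q.1 i * ‖C i.succ - C i.castSucc‖) ≠ 0 := by
    filter_upwards [ae_eq_zero_of_inner_edge] with C hC
    obtain ⟨s, w, hsw⟩ := exists_stretch_dmu3_injective hd hC
    have h1 : ContDiff ℝ ⊤ fun q : (Fin d → ℝ) × EuclideanSpace ℝ (Fin d) =>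
        stretch q.1 q.2 C := by
      refine contDiff_pi.2 fun j => ?_
      unfold stretch
      refine ContDiff.add (by fun_prop) (ContDiff.sum fun i _ => ?_)
      split_ifs <;> fun_prop
    have h2 : ContDiff ℝ ⊤ fun q : (Fin d → ℝ) × EuclideanSpace ℝ (Fin d) =>
        fun i => q.1 i * ‖C i.succ - C i.castSucc‖ := by fun_prop
    have h3 : ContDiff ℝ ⊤ fun q : (Fin d → ℝ) × EuclideanSpace ℝ (Fin d) =>
        gramMu3 (stretch q.1 q.2 C) (fun i => q.1 i * ‖C i.succ - C i.castSucc‖) :=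
      contDiff_gramMu3 h1 h2
    exact ae_ne_zero_of_contDiff_omega _ h3 (z₀ := (s, w))
      ((gramMu3_ne_zero_iff _ _).2 hsw)
  have hmeas : MeasurableSet {r : (Fin (d + 1) → EuclideanSpace ℝ (Fin d)) ×
      ((Fin d → ℝ) × EuclideanSpace ℝ (Fin d)) | gramMu3 (stretch r.2.1 r.2.2 r.1)
        (fun i => r.2.1 i * ‖r.1 i.succ - r.1 i.castSucc‖) ≠ 0} := by
    have h1 : Continuous fun r : (Fin (d + 1) → EuclideanSpace ℝ (Fin d)) ×
        ((Fin d → ℝ) × EuclideanSpace ℝ (Fin d)) => stretch r.2.1 r.2.2 r.1 := by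
      refine continuous_pi fun j => ?_
      unfold stretch
      refine Continuous.add (by fun_prop) (continuous_finsetSum _ fun i _ => ?_)
      split_ifs <;> fun_prop
    have h2 : Continuous fun r : (Fin (d + 1) → EuclideanSpace ℝ (Fin d)) ×
        ((Fin d → ℝ) × EuclideanSpace ℝ (Fin d)) =>
        fun i : Fin d => r.2.1 i * ‖r.1 i.succ - r.1 i.castSucc‖ := by fun_prop
    exact (isOpen_ne_fun (continuous_gramMu3 h1 h2) continuous_const).measurableSet
  have hdense := Measure.dense_of_ae ((Measure.ae_ae_comm hmeas).1 hae)
  obtain ⟨⟨s, w⟩, hs, hsw⟩ := hdense.inter_open_nonempty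
    ((Set.univ.pi fun _ => Set.Ioi (0 : ℝ)) ×ˢ Set.univ)
    ((isOpen_set_pi Set.finite_univ fun _ _ => isOpen_Ioi).prod isOpen_univ)
    ⟨(fun _ => 1, 0), by simp⟩
  rw [Set.mem_ofPred_eq] at hsw
  have hs' (i) : 0 < s i := hs.1 i (Set.mem_univ i)
  refine ae_of_ae_stretch (fun i => (hs' i).ne') w ?_
  simpa only [stretch_succ_sub_castSucc, norm_smul, Real.norm_of_nonneg (hs' _).le] using hsw

theorem dmu3_div {M d : ℕ} (C : Fin (M + 1) → EuclideanSpace ℝ (Fin d)) (p : Fin M → ℝ) (r : ℝ)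
    (h : Fin (M + 1) → EuclideanSpace ℝ (Fin d)) (j k l : Fin d) :
    dmu3 C (fun i => p i / r) h j k l = dmu3 C p h j k l / r := by
  unfold dmu3
  rw [Finset.sum_div]
  exact Finset.sum_congr rfl fun i _ => by ring

/-- Let `M = d ≥ 4`. For almost every `C*` with consecutive rows distinct,
with proportional segment lengths `p*` and `m₃* = μ₃(C*, p*)`, there is a neighborhood of `C*`
on which, for every `C ≠ C*`, the directional derivative of `C ↦ L_{m₃*}(C, p*)` at `C` in the
direction `C* − C` is strictly negative. -/
theorem recovery_C_from_pstar_wellposed (d : ℕ) (hd : 4 ≤ d) (M : ℕ) (hMd : M = d) :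
    ∀ᵐ Cstar : Fin (M + 1) → EuclideanSpace ℝ (Fin d) ∂volume,
      (∀ i : Fin M, Cstar i.succ ≠ Cstar i.castSucc) →
      ∃ U ∈ nhds Cstar, ∀ C ∈ U, C ≠ Cstar →
        deriv (fun s : ℝ =>
            Lloss (mu3 Cstar (propSeg Cstar))
              (fun i => C i + s • (Cstar i - C i)) (propSeg Cstar)) 0 < 0 := by
  subst hMd
  filter_upwards [ae_gramMu3_edge_ne_zero hd] with C hC hne
  have hpos : 0 < ∑ k : Fin M, ‖C k.succ - C k.castSucc‖ :=
    Finset.sum_pos (fun i _ => norm_pos_iff.2 (sub_ne_zero.2 (hne i)))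
      ⟨⟨0, by omega⟩, Finset.mem_univ _⟩
  refine exists_nhds_deriv_Lloss_neg (propSeg C) C fun h hh =>
    (gramMu3_ne_zero_iff _ _).1 hC h ?_
  funext j k l
  have hjkl : dmu3 C (propSeg C) h j k l = 0 := by rw [hh]; rfl
  exact (div_eq_zero_iff.1 ((dmu3_div C _ _ h j k l).symm.trans hjkl)).resolve_right hpos.ne'
end
end
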